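/- Let F be an invertible 2×2 complex matrix with F·F̄ = ±1, where F̄ denotes the entrywise complex conjugate. Then there exist a unitary 2×2 matrix v and a real number q with −1 ≤ q ≤ 1, q ≠ 0, such that F = v·F_q·vᵗ, where F_q is the 2×2 matrix with first row (0, |q|^{1/2}) and second row (−sgn(q)·|q|^{−1/2}, 0). Moreover, the number q is uniquely determined by F. -/

import Mathlib

open Matrix

/-- For `q ∈ [-1,1] \ {0}`, the standard matrix
`F_q = [[0, |q|^{1/2}], [-sgn(q) |q|^{-1/2}, 0]]`. -/
noncomputable def Fq (q : ℝ) : Matrix (Fin 2) (Fin 2) ℂ :=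
  !![0, ((Real.sqrt |q| : ℝ) : ℂ);
     ((-Real.sign q * (Real.sqrt |q|)⁻¹ : ℝ) : ℂ), 0]

/-!
The quadratic form `x ↦ xᵗ A x` has a unit isotropic vector, and completing it to an orthonormal
basis makes a diagonal entry of `A` vanish by unitary congruence. For a `2 × 2` matrix with
`A Ā = ε ≠ 0` the other diagonal entry then vanishes as well, leaving entries `b`, `d` off the
diagonal with `b d̄ = ε`. A swap of the coordinates arranges `|b| ≤ |d|`, and a phase makes `b`
positive; for `ε = ±1` this is `F_q` with `q = -ε |b|²`.

Uniqueness comes from two invariants of unitary congruence: the scalar `A Ā`, equal to `-sgn q` for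
`F_q`, and `tr (A A*)`, equal to `|q| + |q|⁻¹`, which determines `|q|` in `(0, 1]`.
-/

/-- Unitary congruence `A = U B Uᵗ` of square matrices over a commutative star ring: the relation
`F₁ ∼ F₂` that classifies the quantum groups `A_o(F)` up to isomorphism. -/
def UnitarilyCongruent {n R : Type*} [Fintype n] [DecidableEq n] [CommRing R] [StarRing R]
    (A B : Matrix n n R) : Prop :=
  ∃ U ∈ unitaryGroup n R, A = U * B * Uᵀ

section

variable {n R : Type*} [Fintype n] [DecidableEq n] [CommRing R] [StarRing R]
  {A B C : Matrix n n R}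

theorem unitarilyCongruent_iff_exists_conjTranspose_mul_self_eq_one :
    UnitarilyCongruent A B ↔ ∃ U : Matrix n n R, Uᴴ * U = 1 ∧ A = U * B * Uᵀ := by
  simp only [UnitarilyCongruent, mem_unitaryGroup_iff', star_eq_conjTranspose]

namespace UnitarilyCongruent

theorem symm (h : UnitarilyCongruent A B) : UnitarilyCongruent B A := by
  obtain ⟨U, hU, rfl⟩ := h
  refine ⟨Uᴴ, Unitary.star_mem hU, ?_⟩
  have hUU : Uᴴ * U = 1 := mem_unitaryGroup_iff'.mp hU
  have hUU' : Uᵀ * Uᴴᵀ = 1 := by rw [← transpose_mul, hUU, transpose_one]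
  calc B = Uᴴ * U * B * (Uᵀ * Uᴴᵀ) := by rw [hUU, hUU', one_mul, mul_one]
    _ = Uᴴ * (U * B * Uᵀ) * Uᴴᵀ := by simp only [mul_assoc]

theorem trans (hAB : UnitarilyCongruent A B) (hBC : UnitarilyCongruent B C) :
    UnitarilyCongruent A C := by
  obtain ⟨U, hU, rfl⟩ := hAB
  obtain ⟨V, hV, rfl⟩ := hBC
  exact ⟨U * V, mul_mem hU hV, by simp only [transpose_mul, mul_assoc]⟩

theorem mul_map_conj_eq_smul_one (h : UnitarilyCongruent A B) {c : R}
    (hA : A * A.map (starRingEnd R) = c • 1) : B * B.map (starRingEnd R) = c • 1 := by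
  obtain ⟨U, hU, rfl⟩ := h.symm
  have hUU' : Uᵀ * U.map (starRingEnd R) = 1 :=
    mem_unitaryGroup_iff.mp (transpose_mem_unitaryGroup_iff.mpr hU)
  calc U * A * Uᵀ * (U * A * Uᵀ).map (starRingEnd R)
      = U * A * (Uᵀ * U.map (starRingEnd R)) * A.map (starRingEnd R) * Uᴴ := by
        simp only [Matrix.map_mul, mul_assoc]
        rfl
    _ = U * (A * A.map (starRingEnd R)) * Uᴴ := by simp only [hUU', mul_one, mul_assoc]
    _ = c • (U * Uᴴ) := by rw [hA, Matrix.mul_smul, mul_one, Matrix.smul_mul]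
    _ = c • 1 := by rw [← star_eq_conjTranspose, mem_unitaryGroup_iff.mp hU]

theorem trace_mul_conjTranspose_eq (h : UnitarilyCongruent A B) :
    (A * Aᴴ).trace = (B * Bᴴ).trace := by
  obtain ⟨U, hU, rfl⟩ := h
  have hUU : Uᴴ * U = 1 := mem_unitaryGroup_iff'.mp hU
  have hUU' : Uᵀ * Uᵀᴴ = 1 := mem_unitaryGroup_iff.mp (transpose_mem_unitaryGroup_iff.mpr hU)
  calc (U * B * Uᵀ * (U * B * Uᵀ)ᴴ).trace = (U * (B * (Uᵀ * Uᵀᴴ) * Bᴴ * Uᴴ)).trace := by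
        simp only [conjTranspose_mul, mul_assoc]
    _ = (B * Bᴴ * (Uᴴ * U)).trace := by rw [hUU', mul_one, trace_mul_comm, mul_assoc]
    _ = (B * Bᴴ).trace := by rw [hUU, mul_one]

theorem submatrix_perm (A : Matrix n n R) (σ : Equiv.Perm n) :
    UnitarilyCongruent (A.submatrix σ σ) A := by
  refine ⟨σ.permMatrix R, ?_, ?_⟩
  · rw [mem_unitaryGroup_iff, star_eq_conjTranspose, conjTranspose_permMatrix, ← permMatrix_mul,
      inv_mul_cancel, permMatrix_one]
  · rw [transpose_permMatrix, PEquiv.toMatrix_toPEquiv_mul, PEquiv.mul_toMatrix_toPEquiv]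
    rfl

theorem smul_of_norm_eq_one {p : ℂ} (hp : ‖p‖ = 1) (A : Matrix n n ℂ) :
    UnitarilyCongruent (p • A) A := by
  obtain ⟨z, rfl⟩ := IsAlgClosed.exists_eq_mul_self p
  have hz : star z * z = 1 := by
    rw [Complex.star_def, Complex.conj_mul', ← Complex.ofReal_pow, sq, ← norm_mul, hp,
      Complex.ofReal_one]
  refine ⟨z • 1, ?_, ?_⟩
  · rw [mem_unitaryGroup_iff', star_smul, star_one, smul_mul_smul_comm, one_mul, hz, one_smul]
  · rw [transpose_smul, transpose_one, Matrix.smul_mul, Matrix.mul_smul, one_mul, mul_one,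
      smul_smul]

end UnitarilyCongruent

end

theorem exists_ne_zero_binary_quadratic_eq_zero {K : Type*} [Field K] [IsAlgClosed K]
    (a b c : K) : ∃ x y : K, (x ≠ 0 ∨ y ≠ 0) ∧ a * x ^ 2 + b * (x * y) + c * y ^ 2 = 0 := by
  by_cases ha : a = 0
  · exact ⟨1, 0, .inl one_ne_zero, by simp [ha]⟩
  · open Polynomial in
    obtain ⟨x, hx⟩ := IsAlgClosed.exists_root (C a * X ^ 2 + C b * X + C c)
      (by simp [degree_quadratic ha])
    exact ⟨x, 1, .inr one_ne_zero, by simpa [IsRoot] using hx⟩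

theorem exists_ne_zero_dotProduct_mulVec_eq_zero {n K : Type*} [Fintype n] [Nontrivial n]
    [Field K] [IsAlgClosed K] (A : Matrix n n K) : ∃ v : n → K, v ≠ 0 ∧ v ⬝ᵥ A *ᵥ v = 0 := by
  classical
  obtain ⟨i, j, hij⟩ := exists_pair_ne n
  obtain ⟨x, y, hxy, h0⟩ :=
    exists_ne_zero_binary_quadratic_eq_zero (A i i) (A i j + A j i) (A j j)
  refine ⟨Pi.single i x + Pi.single j y, fun hv => ?_, ?_⟩
  · have hx : x = 0 := by simpa [hij] using congrFun hv i
    have hy : y = 0 := by simpa [hij.symm] using congrFun hv j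
    exact hxy.elim (· hx) (· hy)
  · simp only [mulVec_add, mulVec_single, op_smul_eq_smul, dotProduct_add, dotProduct_smul,
      add_dotProduct, single_dotProduct, col_apply, smul_eq_mul]
    linear_combination h0

theorem exists_mem_unitaryGroup_col_eq {n 𝕜 : Type*} [Fintype n] [DecidableEq n] [RCLike 𝕜]
    (i : n) {v : EuclideanSpace 𝕜 n} (hv : ‖v‖ = 1) :
    ∃ U ∈ unitaryGroup n 𝕜, U.col i = v := by
  have hon : Orthonormal 𝕜 (({i} : Set n).domRestrict fun _ => v) :=
    ⟨fun _ => hv, fun j k hjk => (hjk (Subsingleton.elim j k)).elim⟩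
  obtain ⟨b, hb⟩ := hon.exists_orthonormalBasis_extension_of_card_eq finrank_euclideanSpace
  refine ⟨_, (EuclideanSpace.basisFun n 𝕜).toMatrix_orthonormalBasis_mem_unitary b, ?_⟩
  ext j
  simp [Module.Basis.toMatrix_apply, hb i rfl]

theorem UnitarilyCongruent.exists_diag_eq_zero {n : Type*} [Fintype n] [DecidableEq n]
    [Nontrivial n] (A : Matrix n n ℂ) (i : n) : ∃ B, UnitarilyCongruent A B ∧ B i i = 0 := by
  obtain ⟨v, hv, hAv⟩ := exists_ne_zero_dotProduct_mulVec_eq_zero A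
  have hv' : WithLp.toLp 2 v ≠ 0 := by simpa using hv
  obtain ⟨U, hU, hcol⟩ := exists_mem_unitaryGroup_col_eq i (norm_smul_inv_norm (𝕜 := ℂ) hv')
  refine ⟨Uᵀ * A * U, symm ⟨Uᵀ, transpose_mem_unitaryGroup_iff.mpr hU, rfl⟩, ?_⟩
  calc (Uᵀ * A * U) i i = U.col i ⬝ᵥ A *ᵥ U.col i := by
        rw [mul_assoc]
        rfl
    _ = 0 := by simp [hcol, mulVec_smul, hAv]

theorem eq_antidiagonal_of_mul_map_conj_eq_smul_one {R : Type*} [CommRing R] [IsDomain R]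
    [StarRing R] {A : Matrix (Fin 2) (Fin 2) R} {c : R} (hc : c ≠ 0)
    (hA : A * A.map (starRingEnd R) = c • 1) (h00 : A 0 0 = 0) :
    ∃ b d : R, b * star d = c ∧ A = !![0, b; d, 0] := by
  have h01 : A 0 1 * star (A 1 0) = c := by
    simpa [mul_apply, h00, starRingEnd_apply] using congrFun₂ hA 0 0
  have h11 : A 1 1 = 0 := by
    have hmul : A 0 1 * star (A 1 1) = 0 := by
      simpa [mul_apply, h00, starRingEnd_apply] using congrFun₂ hA 0 1
    exact star_eq_zero.mp ((mul_eq_zero.mp hmul).resolve_left (left_ne_zero_of_mul (h01 ▸ hc)))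
  refine ⟨A 0 1, A 1 0, h01, ?_⟩
  conv_lhs => rw [eta_fin_two A, h00, h11]

theorem UnitarilyCongruent.antidiagonal_swap {R : Type*} [CommRing R] [StarRing R] (b d : R) :
    UnitarilyCongruent !![0, b; d, 0] !![0, d; b, 0] := by
  convert submatrix_perm !![0, d; b, 0] (Equiv.swap 0 1) using 1
  ext i j
  fin_cases i <;> fin_cases j <;> rfl

theorem UnitarilyCongruent.exists_antidiagonal_norm_le {A : Matrix (Fin 2) (Fin 2) ℂ} {ε : ℝ}
    (hε : ε ≠ 0) (hA : A * A.map (starRingEnd ℂ) = (ε : ℂ) • 1) :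
    ∃ b d : ℂ, ‖b‖ ≤ ‖d‖ ∧ b * star d = ε ∧ UnitarilyCongruent A !![0, b; d, 0] := by
  obtain ⟨B, hAB, hB⟩ := exists_diag_eq_zero A 0
  obtain ⟨b, d, hbd, rfl⟩ := eq_antidiagonal_of_mul_map_conj_eq_smul_one
    (Complex.ofReal_ne_zero.mpr hε) (hAB.mul_map_conj_eq_smul_one hA) hB
  rcases le_total ‖b‖ ‖d‖ with hle | hle
  · exact ⟨b, d, hle, hbd, hAB⟩
  · have hdb : d * star b = ε := by simpa [mul_comm] using congrArg star hbd
    exact ⟨d, b, hle, hdb, hAB.trans (antidiagonal_swap b d)⟩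

theorem Fq_neg_mul_sq {ε r : ℝ} (hε : |ε| = 1) (hr : 0 < r) :
    Fq (-ε * r ^ 2) = !![0, (r : ℂ); (ε : ℂ) * (r : ℂ)⁻¹, 0] := by
  have hr2 : 0 < r ^ 2 := by positivity
  rcases eq_or_eq_neg_of_abs_eq hε with rfl | rfl
  · simp [Fq, Real.sign_of_neg (neg_neg_of_pos hr2), Real.sqrt_sq hr.le]
  · simp [Fq, Real.sign_of_pos hr2, Real.sqrt_sq hr.le]

theorem UnitarilyCongruent.antidiagonal_Fq {b d : ℂ} {ε : ℝ} (hε : |ε| = 1)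
    (hbd : b * star d = ε) : UnitarilyCongruent !![0, b; d, 0] (Fq (-ε * ‖b‖ ^ 2)) := by
  have hb : b ≠ 0 := by
    rintro rfl
    simp [Complex.ofReal_eq_zero.mp (hbd.symm.trans (zero_mul _))] at hε
  have hdb : star b * d = ε := by simpa [mul_comm] using congrArg star hbd
  have h01 : star b / ‖b‖ * b = ‖b‖ := by
    have hnorm : (‖b‖ : ℂ) ≠ 0 := by simpa using hb
    rw [div_mul_eq_mul_div, Complex.star_def, Complex.conj_mul', sq, mul_div_cancel_right₀ _ hnorm]
  have h10 : star b / ‖b‖ * d = ε * (‖b‖ : ℂ)⁻¹ := by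
    rw [div_mul_eq_mul_div, hdb, div_eq_mul_inv]
  have hphase : Fq (-ε * ‖b‖ ^ 2) = (star b / ‖b‖) • !![0, b; d, 0] := by
    rw [Fq_neg_mul_sq hε (norm_pos_iff.mpr hb)]
    simp only [smul_of, smul_cons, smul_eq_mul, mul_zero, smul_empty, h01, h10]
  rw [hphase]
  exact (smul_of_norm_eq_one (by simp [hb]) _).symm

theorem Fq_mul_map_conj {q : ℝ} (hq : q ≠ 0) :
    Fq q * (Fq q).map (starRingEnd ℂ) = (-Real.sign q : ℂ) • 1 := by
  have hsqrt : (√|q| : ℂ) ≠ 0 := by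
    exact_mod_cast (Real.sqrt_pos.mpr (abs_pos.mpr hq)).ne'
  ext i j
  fin_cases i <;> fin_cases j <;> simp [Fq, mul_apply, mul_left_comm, hsqrt]

theorem trace_antidiagonal_mul_conjTranspose {𝕜 : Type*} [RCLike 𝕜] (b d : 𝕜) :
    (!![0, b; d, 0] * !![0, b; d, 0]ᴴ).trace = ((‖b‖ ^ 2 + ‖d‖ ^ 2 : ℝ) : 𝕜) := by
  rw [trace_fin_two, mul_apply, mul_apply]
  simp [Fin.sum_univ_two, RCLike.mul_conj]

theorem trace_Fq_mul_conjTranspose {q : ℝ} (hq : q ≠ 0) :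
    (Fq q * (Fq q)ᴴ).trace = ((|q| + |q|⁻¹ : ℝ) : ℂ) := by
  have hsqrt : ‖((√|q| : ℝ) : ℂ)‖ ^ 2 = |q| := by simp [Real.sq_sqrt]
  have hsign : Real.sign q ^ 2 = 1 :=
    sq_eq_one_iff.mpr (Real.sign_apply_eq_of_ne_zero q hq).symm
  have hinv : ‖((-Real.sign q * (√|q|)⁻¹ : ℝ) : ℂ)‖ ^ 2 = |q|⁻¹ := by
    rw [Complex.norm_real, Real.norm_eq_abs, sq_abs, mul_pow, neg_sq, hsign, inv_pow,
      Real.sq_sqrt (abs_nonneg q), one_mul]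
  rw [Fq, trace_antidiagonal_mul_conjTranspose, hsqrt, hinv]
  rfl

theorem injOn_add_inv_Ioc {K : Type*} [Field K] [LinearOrder K] [IsStrictOrderedRing K] :
    Set.InjOn (fun x : K => x + x⁻¹) (Set.Ioc 0 1) := by
  rintro x ⟨hx, hx1⟩ y ⟨hy, hy1⟩ h
  have hfactor : (x - y) * (x * y - 1) = 0 := by
    field_simp at h
    linear_combination h
  rcases mul_eq_zero.mp hfactor with h | h <;> nlinarith

theorem real_sign_mul_abs (x : ℝ) : Real.sign x * |x| = x := by
  rcases lt_trichotomy x 0 with hx | rfl | hx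
  · rw [Real.sign_of_neg hx, abs_of_neg hx, neg_one_mul, neg_neg]
  · rw [abs_zero, mul_zero]
  · rw [Real.sign_of_pos hx, abs_of_pos hx, one_mul]

theorem UnitarilyCongruent.exists_Fq {A : Matrix (Fin 2) (Fin 2) ℂ} {ε : ℝ} (hε : |ε| = 1)
    (hA : A * A.map (starRingEnd ℂ) = (ε : ℂ) • 1) :
    ∃ q : ℝ, |q| ≤ 1 ∧ q ≠ 0 ∧ UnitarilyCongruent A (Fq q) := by
  have hε0 : ε ≠ 0 := abs_pos.mp (hε ▸ one_pos)
  obtain ⟨b, d, hle, hbd, hAbd⟩ := exists_antidiagonal_norm_le hε0 hA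
  have hnorm : ‖b‖ * ‖d‖ = 1 := by simpa [hε] using congrArg norm hbd
  refine ⟨-ε * ‖b‖ ^ 2, ?_, ?_, hAbd.trans (antidiagonal_Fq hε hbd)⟩
  · calc |-ε * ‖b‖ ^ 2| = ‖b‖ * ‖b‖ := by simp [abs_mul, hε, sq]
      _ ≤ ‖b‖ * ‖d‖ := by gcongr
      _ = 1 := hnorm
  · exact mul_ne_zero (neg_ne_zero.mpr hε0)
      (pow_ne_zero 2 (left_ne_zero_of_mul (hnorm ▸ one_ne_zero)))

theorem eq_of_unitarilyCongruent_Fq {p q : ℝ} (hp : |p| ≤ 1) (hp0 : p ≠ 0) (hq : |q| ≤ 1)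
    (hq0 : q ≠ 0) (h : UnitarilyCongruent (Fq p) (Fq q)) : p = q := by
  have hsign : Real.sign p = Real.sign q := by
    have hsmul := h.mul_map_conj_eq_smul_one (Fq_mul_map_conj hp0)
    rw [Fq_mul_map_conj hq0] at hsmul
    simpa using (congrFun₂ hsmul 0 0).symm
  have habs : |p| = |q| := by
    have htrace := h.trace_mul_conjTranspose_eq
    rw [trace_Fq_mul_conjTranspose hp0, trace_Fq_mul_conjTranspose hq0, Complex.ofReal_inj]
      at htrace
    exact injOn_add_inv_Ioc ⟨abs_pos.mpr hp0, hp⟩ ⟨abs_pos.mpr hq0, hq⟩ htrace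
  rw [← real_sign_mul_abs p, ← real_sign_mul_abs q, hsign, habs]

/-- Every invertible `2 × 2` complex matrix `F` with `F ⬝ F̄ = ±1` is of the form
`v ⬝ F_q ⬝ vᵗ` with `v` unitary and `q ∈ [-1,1] \ {0}`, and `q` is uniquely
determined by `F`. -/
theorem stmt_7 (F : Matrix (Fin 2) (Fin 2) ℂ) (hF : IsUnit F)
    (h : F * F.map (starRingEnd ℂ) = (1 : Matrix (Fin 2) (Fin 2) ℂ) ∨
         F * F.map (starRingEnd ℂ) = -(1 : Matrix (Fin 2) (Fin 2) ℂ)) :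
    ∃! q : ℝ, -1 ≤ q ∧ q ≤ 1 ∧ q ≠ 0 ∧
      ∃ v : Matrix (Fin 2) (Fin 2) ℂ, vᴴ * v = 1 ∧ F = v * Fq q * vᵀ := by
  obtain ⟨ε, hε, hFε⟩ : ∃ ε : ℝ, |ε| = 1 ∧ F * F.map (starRingEnd ℂ) = (ε : ℂ) • 1 := by
    rcases h with h | h
    · exact ⟨1, abs_one, by simpa using h⟩
    · exact ⟨-1, by simp, by simpa using h⟩
  simp only [← unitarilyCongruent_iff_exists_conjTranspose_mul_self_eq_one, ← and_assoc, ← abs_le]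
  obtain ⟨q, hq, hq0, hFq⟩ := UnitarilyCongruent.exists_Fq hε hFε
  refine ⟨q, ⟨⟨hq, hq0⟩, hFq⟩, ?_⟩
  rintro p ⟨⟨hp, hp0⟩, hFp⟩
  exact eq_of_unitarilyCongruent_Fq hp hp0 hq hq0 (hFp.symm.trans hFq)
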